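/- arXiv:2511.13693 — 2 statements merged into one kernel-verified Lean document; each statement's English description precedes it below -/
import Mathlib

section
/- Let k > d ≥ 0 be integers and let G be a finite simple graph that is k-degenerate. Then the vertex set of G can be partitioned into two sets X and Y such that the subgraph of G induced on X is d-degenerate and the subgraph of G induced on Y is (k−d−1)-degenerate. -/
/-- The subgraph of `G` induced on `A` is `d`-degenerate: every nonempty (finite)
subset of `A` contains a vertex with at most `d` neighbours inside that subset. -/
def DegenOn {V : Type*} (G : SimpleGraph V) (d : ℕ) (A : Set V) : Prop :=
  ∀ S : Set V, S ⊆ A → S.Finite → S.Nonempty → ∃ v ∈ S, (S ∩ G.neighborSet v).ncard ≤ d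

/-- `G` is `d`-degenerate. -/
def Degen {V : Type*} (G : SimpleGraph V) (d : ℕ) : Prop :=
  DegenOn G d Set.univ

/-- `α_d(G)`: the maximum number of vertices of an induced `d`-degenerate subgraph of `G`. -/
noncomputable def alphaDeg {V : Type*} [Fintype V] (G : SimpleGraph V) (d : ℕ) : ℕ :=
  sSup {m : ℕ | ∃ A : Set V, DegenOn G d A ∧ A.ncard = m}

theorem degenOn_insert {V : Type*} [Fintype V] (G : SimpleGraph V) (d : ℕ) (X : Set V) (v : V)
    (hX : DegenOn G d X) (hv : (X ∩ G.neighborSet v).ncard ≤ d) : DegenOn G d (insert v X) := by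
  intro S hS hf hne
  by_cases h : v ∈ S
  · refine ⟨v, h, le_trans (Set.ncard_le_ncard ?_ (Set.toFinite _)) hv⟩
    rintro x ⟨hx, hxv⟩
    rcases hS hx with rfl | h'
    · exact absurd hxv (by simp)
    · exact ⟨h', hxv⟩
  · refine hX S ?_ hf hne
    intro x hx
    rcases hS hx with rfl | h'
    · exact absurd hx h
    · exact h'

theorem split_aux {V : Type*} [Fintype V] (G : SimpleGraph V) (k d : ℕ) (hdk : d < k)
    (hG : Degen G k) (n : ℕ) : ∀ A : Set V, A.ncard = n →
    ∃ X Y : Set V, X ∪ Y = A ∧ Disjoint X Y ∧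
      DegenOn G d X ∧ DegenOn G (k - d - 1) Y := by
  induction n with
  | zero =>
    intro A hA
    have hA : A = ∅ := (Set.ncard_eq_zero (Set.toFinite _)).1 hA
    have h0 : ∀ m, DegenOn G m (∅ : Set V) := by
      intro m S hS _ hne
      exact absurd (Set.subset_empty_iff.1 hS) hne.ne_empty
    exact ⟨∅, ∅, by simp [hA], by simp, h0 _, h0 _⟩
  | succ n ih =>
    intro A hA
    have hne : A.Nonempty := by
      rw [← Set.ncard_pos (Set.toFinite _)]; omega
    obtain ⟨v, hvA, hv⟩ := hG A (Set.subset_univ _) (Set.toFinite _) hne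
    obtain ⟨X, Y, hU, hD, hX, hY⟩ := ih (A \ {v}) (by
      rw [Set.ncard_diff_singleton_of_mem hvA]; omega)
    have hvn : v ∉ X ∪ Y := by rw [hU]; simp
    have hAU : insert v (X ∪ Y) = A := by rw [hU]; simp [Set.insert_eq_of_mem hvA]
    have hsum : (X ∩ G.neighborSet v).ncard + (Y ∩ G.neighborSet v).ncard ≤ k := by
      rw [← Set.ncard_union_eq (hD.mono Set.inter_subset_left Set.inter_subset_left)
        (Set.toFinite _) (Set.toFinite _), ← Set.union_inter_distrib_right, hU]
      exact le_trans (Set.ncard_le_ncard (Set.inter_subset_inter_left _ Set.diff_subset)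
        (Set.toFinite _)) hv
    have hvX : v ∉ X := fun h => hvn (Or.inl h)
    have hvY : v ∉ Y := fun h => hvn (Or.inr h)
    by_cases h : (X ∩ G.neighborSet v).ncard ≤ d
    · exact ⟨insert v X, Y, by rw [Set.insert_union, hAU],
        Set.disjoint_insert_left.2 ⟨hvY, hD⟩, degenOn_insert G d X v hX h, hY⟩
    · exact ⟨X, insert v Y, by rw [Set.union_insert, hAU],
        Set.disjoint_insert_right.2 ⟨hvX, hD⟩, hX,
        degenOn_insert G _ Y v hY (by omega)⟩

theorem stmt_3 {V : Type*} [Fintype V] (G : SimpleGraph V) (k d : ℕ) (hdk : d < k)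
    (hG : Degen G k) :
    ∃ X Y : Set V, X ∪ Y = Set.univ ∧ Disjoint X Y ∧
      DegenOn G d X ∧ DegenOn G (k - d - 1) Y := by
  exact split_aux G k d hdk hG _ Set.univ rfl
end

section
/- The complete graph K_4 on four vertices is 3-degenerate but not 2-degenerate (i.e., it has degeneracy exactly 3), and α_1(K_4) = 2; consequently the bound α_1(G) ≥ n/2 for 3-degenerate graphs G is tight, so α_1(3) = 1/2. -/
/-- `α_d(k)`: the infimum, over all finite simple graphs `G` of degeneracy exactly `k`,
of the ratio `α_d(G) / |V(G)|`. -/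
noncomputable def alphaRatio (d k : ℕ) : ℝ :=
  sInf {r : ℝ | ∃ (n : ℕ) (G : SimpleGraph (Fin n)),
    Degen G k ∧ ¬ Degen G (k - 1) ∧ r = (alphaDeg G d : ℝ) / (n : ℝ)}

theorem degenOn_insert_aux {V : Type*} [Finite V] (G : SimpleGraph V) (d : ℕ) (A : Set V) (v : V)
    (hA : DegenOn G d A) (hv : (A ∩ G.neighborSet v).ncard ≤ d) : DegenOn G d (insert v A) := by
  intro S hS hf hne
  by_cases h : v ∈ S
  · refine ⟨v, h, le_trans (Set.ncard_le_ncard ?_ (Set.toFinite _)) hv⟩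
    rintro x ⟨hx, hxv⟩
    refine ⟨?_, hxv⟩
    rcases hS hx with rfl | hx
    · exact absurd hxv (G.loopless.irrefl _)
    · exact hx
  · refine hA S ?_ hf hne
    intro x hx
    rcases hS hx with rfl | h'
    · exact absurd hx h
    · exact h'

theorem partition_aux {V : Type*} [Finite V] (G : SimpleGraph V) (hG : Degen G 3) (n : ℕ) :
    ∀ S : Set V, S.ncard = n →
      ∃ A B : Set V, A ∪ B = S ∧ Disjoint A B ∧ DegenOn G 1 A ∧ DegenOn G 1 B := by
  have he : DegenOn G 1 (∅ : Set V) := by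
    intro S hS _ hne
    obtain ⟨x, hx⟩ := hne
    exact absurd (hS hx) (Set.notMem_empty x)
  induction n with
  | zero =>
    intro S hS
    rw [Set.ncard_eq_zero (Set.toFinite _)] at hS
    subst hS
    exact ⟨∅, ∅, by simp, by simp, he, he⟩
  | succ n ih =>
    intro S hS
    have hne : S.Nonempty := by
      rw [← Set.ncard_pos (Set.toFinite _)]; omega
    obtain ⟨v, hvS, hv⟩ := hG S (Set.subset_univ _) (Set.toFinite _) hne
    obtain ⟨A, B, hAB, hd, hA, hB⟩ := ih (S \ {v}) (by
      rw [Set.ncard_sdiff_singleton_of_mem hvS]; omega)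
    have hvn : v ∉ A ∪ B := by rw [hAB]; simp
    have hvA : v ∉ A := fun h => hvn (Or.inl h)
    have hvB : v ∉ B := fun h => hvn (Or.inr h)
    have hU : insert v (A ∪ B) = S := by
      rw [hAB]; simp [Set.insert_eq_of_mem hvS]
    have hsum : (A ∩ G.neighborSet v).ncard + (B ∩ G.neighborSet v).ncard ≤ 3 := by
      rw [← Set.ncard_union_eq (hd.mono Set.inter_subset_left Set.inter_subset_left)
        (Set.toFinite _) (Set.toFinite _), ← Set.union_inter_distrib_right]
      refine le_trans (Set.ncard_le_ncard ?_ (Set.toFinite _)) hv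
      apply Set.inter_subset_inter_left
      rw [hAB]; exact Set.diff_subset
    by_cases h1 : (A ∩ G.neighborSet v).ncard ≤ 1
    · refine ⟨insert v A, B, by rw [Set.insert_union, hU], ?_, degenOn_insert_aux G 1 A v hA h1, hB⟩
      exact Set.disjoint_insert_left.2 ⟨hvB, hd⟩
    · refine ⟨A, insert v B, by rw [Set.union_insert, hU], ?_, hA,
        degenOn_insert_aux G 1 B v hB (by omega)⟩
      exact Set.disjoint_insert_right.2 ⟨hvA, hd⟩

theorem le_alpha_aux {V : Type*} [Fintype V] (G : SimpleGraph V) (d : ℕ) (A : Set V)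
    (hA : DegenOn G d A) : A.ncard ≤ alphaDeg G d := by
  refine le_csSup ⟨Fintype.card V, ?_⟩ ⟨A, hA, rfl⟩
  rintro m ⟨B, _, rfl⟩
  rw [← Nat.card_eq_fintype_card]
  exact Set.ncard_le_card B

theorem half_aux {n : ℕ} (G : SimpleGraph (Fin n)) (hG : Degen G 3) :
    n ≤ 2 * alphaDeg G 1 := by
  obtain ⟨A, B, hAB, hd, hA, hB⟩ := partition_aux G hG _ Set.univ rfl
  have h := Set.ncard_union_eq hd (Set.toFinite _) (Set.toFinite _)
  rw [hAB, Set.ncard_univ, Nat.card_fin] at h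
  have := le_alpha_aux G 1 A hA
  have := le_alpha_aux G 1 B hB
  omega

theorem top_aux (S : Set (Fin 4)) (v : Fin 4) (hv : v ∈ S) :
    (S ∩ (⊤ : SimpleGraph (Fin 4)).neighborSet v).ncard + 1 = S.ncard := by
  have : S ∩ (⊤ : SimpleGraph (Fin 4)).neighborSet v = S \ {v} := by
    ext x; simp [eq_comm]
  rw [this]
  exact Set.ncard_sdiff_singleton_add_one hv (Set.toFinite _)

theorem stmt_6 :
    Degen (⊤ : SimpleGraph (Fin 4)) 3 ∧ ¬ Degen (⊤ : SimpleGraph (Fin 4)) 2 ∧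
    alphaDeg (⊤ : SimpleGraph (Fin 4)) 1 = 2 ∧
    alphaRatio 1 3 = 1 / 2 := by
  have h1 : Degen (⊤ : SimpleGraph (Fin 4)) 3 := by
    intro S _ _ hne
    obtain ⟨v, hv⟩ := hne
    have h := top_aux S v hv
    have h' := Set.ncard_le_card S
    rw [Nat.card_fin] at h'
    exact ⟨v, hv, by omega⟩
  have h2 : ¬ Degen (⊤ : SimpleGraph (Fin 4)) 2 := by
    intro h
    obtain ⟨v, hv, hle⟩ := h Set.univ (Set.subset_univ _) (Set.toFinite _) Set.univ_nonempty
    have h := top_aux _ v hv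
    rw [Set.ncard_univ, Nat.card_fin] at h
    omega
  have h3 : alphaDeg (⊤ : SimpleGraph (Fin 4)) 1 = 2 := by
    apply le_antisymm
    · refine csSup_le' ?_
      rintro m ⟨A, hA, rfl⟩
      rcases A.eq_empty_or_nonempty with rfl | hne
      · simp
      · obtain ⟨v, hv, hle⟩ := hA A subset_rfl (Set.toFinite _) hne
        have h := top_aux A v hv
        omega
    · have := half_aux _ h1
      omega
  refine ⟨h1, h2, h3, ?_⟩
  have hl : IsLeast {r : ℝ | ∃ (n : ℕ) (G : SimpleGraph (Fin n)),
    Degen G 3 ∧ ¬ Degen G (3 - 1) ∧ r = (alphaDeg G 1 : ℝ) / (n : ℝ)} (1 / 2) := by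
    refine ⟨⟨4, ⊤, h1, h2, ?_⟩, ?_⟩
    · rw [h3]; norm_num
    · rintro r ⟨n, G, hG, hn, rfl⟩
      have hpos : 0 < n := by
        rcases Nat.eq_zero_or_pos n with rfl | h
        · exfalso
          apply hn
          rintro S _ _ ⟨x, _⟩
          exact x.elim0
        · exact h
      have hh : (n : ℝ) ≤ 2 * alphaDeg G 1 := by exact_mod_cast half_aux G hG
      have hp : (0 : ℝ) < n := by exact_mod_cast hpos
      rw [div_le_div_iff₀ (by norm_num) hp]
      linarith
  exact hl.csInf_eq
end
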